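/- (Cocycle property of U.) Fix c ∈ ℂ. Let Φ = (w₁,w₂) : Ω → Ω' and Ψ = (u₁,u₂) : Ω' → Ω'' be holomorphic maps between open subsets of ℂ² such that the Jacobian D(Φ) := ∂ₓw₁∂ᵧw₂ − ∂ₓw₂∂ᵧw₁ and J(w₁,w₂) are nonzero on Ω, and the corresponding quantities for Ψ on Ω' and for Ψ∘Φ on Ω are nonzero. For a map Θ of (s,t) define the 5×5 block matrix U_Θ := [[M(Θ;s,t), c·D(Θ)·V(Θ)],[0, D(Θ)]], where D(Θ) is the Jacobian determinant of Θ and V(Θ) is the column vector of the four GL(3) derivatives ({Θ₁,Θ₂;s,t}_s, {Θ₁,Θ₂;s,t}_t, [Θ₁,Θ₂;s,t]_s, [Θ₁,Θ₂;s,t]_t)ᵀ. Then at every p ∈ Ω: U_Φ(p) · U_Ψ(Φ(p)) = U_{Ψ∘Φ}(p). -/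

import Mathlib

open Complex Matrix

noncomputable section

/-- Partial derivative in the first complex variable. -/
def pdx (f : ℂ × ℂ → ℂ) (p : ℂ × ℂ) : ℂ := deriv (fun x => f (x, p.2)) p.1

/-- Partial derivative in the second complex variable. -/
def pdy (f : ℂ × ℂ → ℂ) (p : ℂ × ℂ) : ℂ := deriv (fun y => f (p.1, y)) p.2

/-- The Jacobian `J(u₁,u₂) = ∂ₓu₁·∂ᵧu₂ − ∂ₓu₂·∂ᵧu₁`. -/
def Jac (u₁ u₂ : ℂ × ℂ → ℂ) (p : ℂ × ℂ) : ℂ :=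
  pdx u₁ p * pdy u₂ p - pdx u₂ p * pdy u₁ p

/-- The GL(3) derivative `{u₁,u₂;x,y}ₓ`. -/
def brX (u₁ u₂ : ℂ × ℂ → ℂ) (p : ℂ × ℂ) : ℂ :=
  (pdx u₁ p * pdx (pdx u₂) p - pdx u₂ p * pdx (pdx u₁) p) / Jac u₁ u₂ p

/-- The GL(3) derivative `{u₁,u₂;x,y}ᵧ`. -/
def brY (u₁ u₂ : ℂ × ℂ → ℂ) (p : ℂ × ℂ) : ℂ :=
  -(pdy u₁ p * pdy (pdy u₂) p - pdy u₂ p * pdy (pdy u₁) p) / Jac u₁ u₂ p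

/-- The GL(3) derivative `[u₁,u₂;x,y]ₓ`. -/
def sqX (u₁ u₂ : ℂ × ℂ → ℂ) (p : ℂ × ℂ) : ℂ :=
  ((pdy u₁ p * pdx (pdx u₂) p - pdy u₂ p * pdx (pdx u₁) p)
      + 2 * (pdx u₁ p * pdx (pdy u₂) p - pdx u₂ p * pdx (pdy u₁) p)) / Jac u₁ u₂ p

/-- The GL(3) derivative `[u₁,u₂;x,y]ᵧ`. -/
def sqY (u₁ u₂ : ℂ × ℂ → ℂ) (p : ℂ × ℂ) : ℂ :=
  -((pdx u₁ p * pdy (pdy u₂) p - pdx u₂ p * pdy (pdy u₁) p)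
      + 2 * (pdy u₁ p * pdx (pdy u₂) p - pdy u₂ p * pdx (pdy u₁) p)) / Jac u₁ u₂ p

/-- The 4×4 matrix `M(w₁,w₂;x,y)` built from the first partial derivatives of
the holomorphic map `(w₁,w₂)`. -/
def Mmat (w₁ w₂ : ℂ × ℂ → ℂ) (p : ℂ × ℂ) : Matrix (Fin 4) (Fin 4) ℂ :=
  !![(pdx w₁ p) ^ 3, -(pdx w₂ p) ^ 3, (pdx w₁ p) ^ 2 * pdx w₂ p,
        -(pdx w₁ p) * (pdx w₂ p) ^ 2;
     -(pdy w₁ p) ^ 3, (pdy w₂ p) ^ 3, -(pdy w₁ p) ^ 2 * pdy w₂ p,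
        (pdy w₁ p) * (pdy w₂ p) ^ 2;
     3 * (pdx w₁ p) ^ 2 * pdy w₁ p, -3 * (pdx w₂ p) ^ 2 * pdy w₂ p,
        (pdx w₁ p) ^ 2 * pdy w₂ p + 2 * pdx w₁ p * pdx w₂ p * pdy w₁ p,
        -(pdx w₂ p) ^ 2 * pdy w₁ p - 2 * pdx w₁ p * pdx w₂ p * pdy w₂ p;
     -3 * pdx w₁ p * (pdy w₁ p) ^ 2, 3 * pdx w₂ p * (pdy w₂ p) ^ 2,
        -(pdx w₂ p) * (pdy w₁ p) ^ 2 - 2 * pdx w₁ p * pdy w₁ p * pdy w₂ p,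
        (pdx w₁ p) * (pdy w₂ p) ^ 2 + 2 * pdx w₂ p * pdy w₁ p * pdy w₂ p]

/-- The column vector of the four GL(3) derivatives of the pair `(u₁,u₂)`. -/
def Vvec (u₁ u₂ : ℂ × ℂ → ℂ) (p : ℂ × ℂ) : Fin 4 → ℂ :=
  ![brX u₁ u₂ p, brY u₁ u₂ p, sqX u₁ u₂ p, sqY u₁ u₂ p]

/-- The 5×5 block matrix `U_Θ = [[M(Θ), c·D(Θ)·V(Θ)], [0, D(Θ)]]`. -/
def Umat (c : ℂ) (w₁ w₂ : ℂ × ℂ → ℂ) (p : ℂ × ℂ) : Matrix (Fin 5) (Fin 5) ℂ :=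
  Matrix.of fun i j =>
    if hi : (i : ℕ) < 4 then
      if hj : (j : ℕ) < 4 then Mmat w₁ w₂ p ⟨i, hi⟩ ⟨j, hj⟩
      else c * Jac w₁ w₂ p * Vvec w₁ w₂ p ⟨i, hi⟩
    else if (j : ℕ) < 4 then 0 else Jac w₁ w₂ p

open MeasureTheory Metric Filter Topology

/-- The derivative of a holomorphic function along a direction `v` is again holomorphic. -/
theorem DifferentiableOn.differentiableAt_fderiv_apply {E : Type*} [NormedAddCommGroup E]
    [NormedSpace ℂ E] [FiniteDimensional ℂ E] {f : E → ℂ} {U : Set E} {p : E}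
    (hf : DifferentiableOn ℂ f U) (hU : IsOpen U) (hp : p ∈ U) (v : E) :
    DifferentiableAt ℂ (fun q => fderiv ℂ f q v) p := by
  borelize E
  obtain ⟨R, hR, hball, hclose⟩ : ∃ R > 0, ball p R ⊆ U ∧ ∀ q ∈ ball p R, ‖f q - f p‖ < 1 := by
    have hcont : ContinuousAt f p := (hf.differentiableAt (hU.mem_nhds hp)).continuousAt
    have h : ∀ᶠ q in 𝓝 p, q ∈ U ∧ ‖f q - f p‖ < 1 :=
      (hU.eventually_mem hp).and ((tendsto_iff_norm_sub_tendsto_zero.1 hcont).eventually_lt_const one_pos)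
    obtain ⟨R, hR, h⟩ := Metric.eventually_nhds_iff_ball.1 h
    exact ⟨R, hR, fun q hq => (h q hq).1, fun q hq => (h q hq).2⟩
  set ρ := R / 3 with hρ
  have hρ0 : 0 < ρ := by positivity
  set r := ρ / (‖v‖ + 1) with hr
  have hr0 : 0 < r := by positivity
  have hrv : r * ‖v‖ ≤ ρ := by
    rw [hr, div_mul_eq_mul_div, div_le_iff₀ (by positivity)]
    nlinarith
  have hmem {q : E} (hq : q ∈ ball p ρ) {z : ℂ} (hz : ‖z‖ ≤ r) : q + z • v ∈ ball p (2 * ρ) := by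
    rw [mem_ball_iff_norm] at hq ⊢
    calc ‖q + z • v - p‖ = ‖(q - p) + z • v‖ := by congr 1; abel
      _ ≤ ‖q - p‖ + ‖z‖ * ‖v‖ := (norm_add_le _ _).trans_eq (by rw [norm_smul])
      _ < 2 * ρ := by nlinarith [mul_le_mul_of_nonneg_right hz (norm_nonneg v)]
  have hsub : ball p (2 * ρ) ⊆ ball p R := ball_subset_ball (by linarith)
  have hdiff {q : E} (hq : q ∈ ball p (2 * ρ)) : DifferentiableAt ℂ f q :=
    hf.differentiableAt (hU.mem_nhds (hball (hsub hq)))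
  have hbound {q : E} (hq : q ∈ ball p (2 * ρ)) : ‖fderiv ℂ f q‖ ≤ 2 / ρ := by
    have hsub' : ball q ρ ⊆ ball p R :=
      ball_subset_ball' (by rw [mem_ball] at hq; linarith)
    refine norm_fderiv_le_div_of_mapsTo_ball (hf.mono (hsub'.trans hball)) ?_ hρ0
    intro q' hq'
    have h1 := hclose q' (hsub' hq')
    have h2 := hclose q (hsub hq)
    rw [mem_closedBall_iff_norm]
    calc ‖f q' - f q‖ = ‖(f q' - f p) - (f q - f p)‖ := by congr 1; abel
      _ ≤ _ := norm_sub_le _ _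
      _ ≤ 2 := by linarith
  have hcircle (θ : ℝ) : ‖circleMap 0 r θ‖ = r := by simp [abs_of_pos hr0]
  let k : ℝ → ℂ := fun θ => circleMap 0 r θ * I * (1 / (circleMap 0 r θ - 0) ^ 2)
  have hk : Continuous k := by
    have h0 (θ : ℝ) : (circleMap 0 r θ - 0) ^ 2 ≠ 0 := by
      exact pow_ne_zero 2 (sub_ne_zero.2 (circleMap_ne_center hr0.ne'))
    fun_prop (disch := exact h0 _)
  have hcauchy {q : E} (hq : q ∈ ball p ρ) : fderiv ℂ f q v =
      (2 * Real.pi * I : ℂ)⁻¹ * ∫ θ in (0 : ℝ)..2 * Real.pi, k θ * f (q + circleMap 0 r θ • v) := by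
    have hd : DifferentiableOn ℂ (fun z : ℂ => f (q + z • v)) (closedBall 0 r) := by
      intro z hz
      have hz' := hdiff (hmem hq (by simpa using hz))
      exact (DifferentiableAt.comp z hz' (by fun_prop)).differentiableWithinAt
    have h := hd.deriv_eq_smul_circleIntegral hr0
    have hq' : DifferentiableAt ℂ f (q + (0 : ℂ) • v) := hdiff (hmem hq (by simpa using hr0.le))
    have hderiv : _root_.deriv (fun z : ℂ => f (q + z • v)) 0 = fderiv ℂ f q v := by
      have hl : HasDerivAt (fun z : ℂ => q + z • v) v 0 := by
        simpa using ((hasDerivAt_id (0 : ℂ)).smul_const v).const_add q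
      simpa [Function.comp_def] using (hq'.hasFDerivAt.comp_hasDerivAt (0 : ℂ) hl).deriv
    rw [hderiv, smul_eq_mul] at h
    rw [← mul_right_inj' two_pi_I_ne_zero, ← h, mul_inv_cancel_left₀ two_pi_I_ne_zero]
    simp only [circleIntegral, deriv_circleMap, smul_eq_mul, k, mul_assoc]
  have hev : (fun q => fderiv ℂ f q v) =ᶠ[𝓝 p] fun q => (2 * Real.pi * I : ℂ)⁻¹ *
      ∫ θ in (0 : ℝ)..2 * Real.pi, k θ * f (q + circleMap 0 r θ • v) :=
    eventually_of_mem (ball_mem_nhds p hρ0) fun q hq => hcauchy hq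
  refine DifferentiableAt.congr_of_eventuallyEq (DifferentiableAt.const_mul ?_ _) hev
  have hcont {q : E} (hq : q ∈ ball p ρ) :
      Continuous fun θ : ℝ => k θ * f (q + circleMap 0 r θ • v) := by
    refine hk.mul (continuous_iff_continuousAt.2 fun θ => ?_)
    exact ContinuousAt.comp (f := fun θ : ℝ => q + circleMap 0 r θ • v)
      (hdiff (hmem hq (hcircle θ).le)).continuousAt (by fun_prop)
  refine (intervalIntegral.hasFDerivAt_integral_of_dominated_of_fderiv_le
    (F' := fun q θ => k θ • fderiv ℂ f (q + circleMap 0 r θ • v))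
    (bound := fun θ => ‖k θ‖ * (2 / ρ)) (ball_mem_nhds p hρ0) ?_ ?_ ?_ ?_ ?_ ?_).differentiableAt
  · exact eventually_of_mem (ball_mem_nhds p hρ0) fun q hq => (hcont hq).aestronglyMeasurable
  · exact (hcont (mem_ball_self hρ0)).intervalIntegrable _ _
  · refine hk.aestronglyMeasurable.smul ?_
    have h : Measurable fun θ : ℝ => fderiv ℂ f (p + circleMap 0 r θ • v) :=
      (measurable_fderiv ℂ f).comp
        (by fun_prop : Continuous fun θ : ℝ => p + circleMap 0 r θ • v).measurable
    exact h.stronglyMeasurable.aestronglyMeasurable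
  · refine Eventually.of_forall fun θ _ q hq => ?_
    rw [norm_smul]
    gcongr
    exact hbound (hmem hq (hcircle θ).le)
  · exact (by fun_prop : Continuous fun θ => ‖k θ‖ * (2 / ρ)).intervalIntegrable _ _
  · refine Eventually.of_forall fun θ _ q hq => ?_
    have h := (hdiff (hmem hq (hcircle θ).le)).hasFDerivAt
    have hl : HasFDerivAt (fun q : E => q + circleMap 0 r θ • v) (ContinuousLinearMap.id ℂ E) q :=
      (hasFDerivAt_id q).add_const _
    simpa using (h.comp q hl).const_mul (k θ)

/-- The second derivative of a holomorphic function is symmetric. -/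
theorem DifferentiableOn.fderiv_fderiv_apply_comm {E : Type*} [NormedAddCommGroup E]
    [NormedSpace ℂ E] [FiniteDimensional ℂ E] {f : E → ℂ} {U : Set E} {p : E}
    (hf : DifferentiableOn ℂ f U) (hU : IsOpen U) (hp : p ∈ U) (v w : E) :
    fderiv ℂ (fun q => fderiv ℂ f q v) p w = fderiv ℂ (fun q => fderiv ℂ f q w) p v := by
  have hd : DifferentiableAt ℂ (fderiv ℂ f) p := by
    let b := Module.finBasis ℂ E
    have hb : fderiv ℂ f = fun q =>
        ∑ i, fderiv ℂ f q (b i) • (b.coord i).toContinuousLinearMap := by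
      ext q v
      conv_lhs => rw [← b.sum_repr v, map_sum]
      simp [mul_comm]
    rw [hb]
    exact DifferentiableAt.fun_sum fun i _ =>
      (hf.differentiableAt_fderiv_apply hU hp (b i)).smul_const _
  have hev : ∀ᶠ q in 𝓝 p, HasFDerivAt f (fderiv ℂ f q) q :=
    eventually_of_mem (hU.mem_nhds hp) fun q hq =>
      (hf.differentiableAt (hU.mem_nhds hq)).hasFDerivAt
  have h := second_derivative_symmetric_of_eventually hev hd.hasFDerivAt v w
  rw [fderiv_clm_apply hd (by fun_prop), fderiv_clm_apply hd (by fun_prop)]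
  simpa using h.symm

theorem pdx_eq_fderiv {f : ℂ × ℂ → ℂ} {p : ℂ × ℂ} (hf : DifferentiableAt ℂ f p) :
    pdx f p = fderiv ℂ f p (1, 0) := by
  have hl : HasDerivAt (fun x : ℂ => (x, p.2)) (1, 0) p.1 :=
    (hasDerivAt_id p.1).prodMk (hasDerivAt_const p.1 p.2)
  exact (HasFDerivAt.comp_hasDerivAt (f := fun x : ℂ => (x, p.2)) p.1 hf.hasFDerivAt hl).deriv

theorem pdy_eq_fderiv {f : ℂ × ℂ → ℂ} {p : ℂ × ℂ} (hf : DifferentiableAt ℂ f p) :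
    pdy f p = fderiv ℂ f p (0, 1) := by
  have hl : HasDerivAt (fun y : ℂ => (p.1, y)) (0, 1) p.2 :=
    (hasDerivAt_const p.2 p.1).prodMk (hasDerivAt_id p.2)
  exact (HasFDerivAt.comp_hasDerivAt (f := fun y : ℂ => (p.1, y)) p.2 hf.hasFDerivAt hl).deriv

theorem fderiv_apply_eq_pdx_pdy {f : ℂ × ℂ → ℂ} {p : ℂ × ℂ} (hf : DifferentiableAt ℂ f p)
    (v : ℂ × ℂ) : fderiv ℂ f p v = pdx f p * v.1 + pdy f p * v.2 := by
  have hv : v = v.1 • ((1, 0) : ℂ × ℂ) + v.2 • ((0, 1) : ℂ × ℂ) := by ext <;> simp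
  conv_lhs => rw [hv]
  rw [map_add, map_smul, map_smul, ← pdx_eq_fderiv hf, ← pdy_eq_fderiv hf]
  simp [mul_comm]

section Holomorphic

variable {f : ℂ × ℂ → ℂ} {U : Set (ℂ × ℂ)} {p : ℂ × ℂ}

theorem pdx_eventuallyEq (hf : DifferentiableOn ℂ f U) (hU : IsOpen U) (hp : p ∈ U) :
    pdx f =ᶠ[𝓝 p] fun q => fderiv ℂ f q (1, 0) :=
  eventually_of_mem (hU.mem_nhds hp) fun _ hq =>
    pdx_eq_fderiv (hf.differentiableAt (hU.mem_nhds hq))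

theorem pdy_eventuallyEq (hf : DifferentiableOn ℂ f U) (hU : IsOpen U) (hp : p ∈ U) :
    pdy f =ᶠ[𝓝 p] fun q => fderiv ℂ f q (0, 1) :=
  eventually_of_mem (hU.mem_nhds hp) fun _ hq =>
    pdy_eq_fderiv (hf.differentiableAt (hU.mem_nhds hq))

theorem differentiableOn_pdx (hf : DifferentiableOn ℂ f U) (hU : IsOpen U) :
    DifferentiableOn ℂ (pdx f) U := fun _ hq =>
  ((hf.differentiableAt_fderiv_apply hU hq _).congr_of_eventuallyEq
    (pdx_eventuallyEq hf hU hq)).differentiableWithinAt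

theorem differentiableOn_pdy (hf : DifferentiableOn ℂ f U) (hU : IsOpen U) :
    DifferentiableOn ℂ (pdy f) U := fun _ hq =>
  ((hf.differentiableAt_fderiv_apply hU hq _).congr_of_eventuallyEq
    (pdy_eventuallyEq hf hU hq)).differentiableWithinAt

theorem pdy_pdx_eq_pdx_pdy (hf : DifferentiableOn ℂ f U) (hU : IsOpen U) (hp : p ∈ U) :
    pdy (pdx f) p = pdx (pdy f) p := by
  rw [pdy_eq_fderiv ((differentiableOn_pdx hf hU).differentiableAt (hU.mem_nhds hp)),
    pdx_eq_fderiv ((differentiableOn_pdy hf hU).differentiableAt (hU.mem_nhds hp)),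
    (pdx_eventuallyEq hf hU hp).fderiv_eq, (pdy_eventuallyEq hf hU hp).fderiv_eq,
    hf.fderiv_fderiv_apply_comm hU hp]

end Holomorphic

theorem Filter.EventuallyEq.pdx_eq {f g : ℂ × ℂ → ℂ} {p : ℂ × ℂ} (h : f =ᶠ[𝓝 p] g) :
    pdx f p = pdx g p :=
  (h.comp_tendsto (g := fun x : ℂ => (x, p.2))
    (Continuous.tendsto' (by fun_prop) _ _ rfl)).deriv_eq

theorem Filter.EventuallyEq.pdy_eq {f g : ℂ × ℂ → ℂ} {p : ℂ × ℂ} (h : f =ᶠ[𝓝 p] g) :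
    pdy f p = pdy g p :=
  (h.comp_tendsto (g := fun y : ℂ => (p.1, y))
    (Continuous.tendsto' (by fun_prop) _ _ rfl)).deriv_eq

section Rules

variable {f g h k : ℂ × ℂ → ℂ} {p : ℂ × ℂ}

theorem pdx_mul_add_mul (hf : DifferentiableAt ℂ f p) (hg : DifferentiableAt ℂ g p)
    (hh : DifferentiableAt ℂ h p) (hk : DifferentiableAt ℂ k p) :
    pdx (fun q => f q * g q + h q * k q) p =
      pdx f p * g p + f p * pdx g p + (pdx h p * k p + h p * pdx k p) := by
  rw [pdx_eq_fderiv (by fun_prop), pdx_eq_fderiv hf, pdx_eq_fderiv hg, pdx_eq_fderiv hh,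
    pdx_eq_fderiv hk, fderiv_fun_add (by fun_prop) (by fun_prop), fderiv_fun_mul hf hg,
    fderiv_fun_mul hh hk]
  simp
  ring

theorem pdy_mul_add_mul (hf : DifferentiableAt ℂ f p) (hg : DifferentiableAt ℂ g p)
    (hh : DifferentiableAt ℂ h p) (hk : DifferentiableAt ℂ k p) :
    pdy (fun q => f q * g q + h q * k q) p =
      pdy f p * g p + f p * pdy g p + (pdy h p * k p + h p * pdy k p) := by
  rw [pdy_eq_fderiv (by fun_prop), pdy_eq_fderiv hf, pdy_eq_fderiv hg, pdy_eq_fderiv hh,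
    pdy_eq_fderiv hk, fderiv_fun_add (by fun_prop) (by fun_prop), fderiv_fun_mul hf hg,
    fderiv_fun_mul hh hk]
  simp
  ring

end Rules

section Chain

variable {f w₁ w₂ : ℂ × ℂ → ℂ} {p : ℂ × ℂ}

theorem fderiv_comp_pair_apply (hf : DifferentiableAt ℂ f (w₁ p, w₂ p))
    (h₁ : DifferentiableAt ℂ w₁ p) (h₂ : DifferentiableAt ℂ w₂ p) (v : ℂ × ℂ) :
    fderiv ℂ (fun q => f (w₁ q, w₂ q)) p v =
      pdx f (w₁ p, w₂ p) * fderiv ℂ w₁ p v + pdy f (w₁ p, w₂ p) * fderiv ℂ w₂ p v := by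
  have h := HasFDerivAt.comp p (f := fun q => (w₁ q, w₂ q)) hf.hasFDerivAt
    (h₁.hasFDerivAt.prodMk h₂.hasFDerivAt)
  rw [show (fun q => f (w₁ q, w₂ q)) = f ∘ fun q => (w₁ q, w₂ q) from rfl, h.fderiv]
  simp [fderiv_apply_eq_pdx_pdy hf]

theorem pdx_comp_pair (hf : DifferentiableAt ℂ f (w₁ p, w₂ p))
    (h₁ : DifferentiableAt ℂ w₁ p) (h₂ : DifferentiableAt ℂ w₂ p) :
    pdx (fun q => f (w₁ q, w₂ q)) p =
      pdx f (w₁ p, w₂ p) * pdx w₁ p + pdy f (w₁ p, w₂ p) * pdx w₂ p := by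
  have h : DifferentiableAt ℂ (fun q => f (w₁ q, w₂ q)) p :=
    hf.comp p (f := fun q => (w₁ q, w₂ q)) (h₁.prodMk h₂)
  rw [pdx_eq_fderiv h,
    fderiv_comp_pair_apply hf h₁ h₂, pdx_eq_fderiv h₁, pdx_eq_fderiv h₂]

theorem pdy_comp_pair (hf : DifferentiableAt ℂ f (w₁ p, w₂ p))
    (h₁ : DifferentiableAt ℂ w₁ p) (h₂ : DifferentiableAt ℂ w₂ p) :
    pdy (fun q => f (w₁ q, w₂ q)) p =
      pdx f (w₁ p, w₂ p) * pdy w₁ p + pdy f (w₁ p, w₂ p) * pdy w₂ p := by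
  have h : DifferentiableAt ℂ (fun q => f (w₁ q, w₂ q)) p :=
    hf.comp p (f := fun q => (w₁ q, w₂ q)) (h₁.prodMk h₂)
  rw [pdy_eq_fderiv h,
    fderiv_comp_pair_apply hf h₁ h₂, pdy_eq_fderiv h₁, pdy_eq_fderiv h₂]

theorem pdx_comp_pair_eventuallyEq {Ω Ω' : Set (ℂ × ℂ)} (hΩ : IsOpen Ω) (hΩ' : IsOpen Ω')
    (h₁ : DifferentiableOn ℂ w₁ Ω) (h₂ : DifferentiableOn ℂ w₂ Ω)
    (hmaps : ∀ q ∈ Ω, (w₁ q, w₂ q) ∈ Ω') (hf : DifferentiableOn ℂ f Ω') (hp : p ∈ Ω) :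
    pdx (fun q => f (w₁ q, w₂ q)) =ᶠ[𝓝 p] fun q =>
      pdx f (w₁ q, w₂ q) * pdx w₁ q + pdy f (w₁ q, w₂ q) * pdx w₂ q :=
  eventually_of_mem (hΩ.mem_nhds hp) fun q hq =>
    pdx_comp_pair (hf.differentiableAt (hΩ'.mem_nhds (hmaps q hq)))
      (h₁.differentiableAt (hΩ.mem_nhds hq)) (h₂.differentiableAt (hΩ.mem_nhds hq))

theorem pdy_comp_pair_eventuallyEq {Ω Ω' : Set (ℂ × ℂ)} (hΩ : IsOpen Ω) (hΩ' : IsOpen Ω')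
    (h₁ : DifferentiableOn ℂ w₁ Ω) (h₂ : DifferentiableOn ℂ w₂ Ω)
    (hmaps : ∀ q ∈ Ω, (w₁ q, w₂ q) ∈ Ω') (hf : DifferentiableOn ℂ f Ω') (hp : p ∈ Ω) :
    pdy (fun q => f (w₁ q, w₂ q)) =ᶠ[𝓝 p] fun q =>
      pdx f (w₁ q, w₂ q) * pdy w₁ q + pdy f (w₁ q, w₂ q) * pdy w₂ q :=
  eventually_of_mem (hΩ.mem_nhds hp) fun q hq =>
    pdy_comp_pair (hf.differentiableAt (hΩ'.mem_nhds (hmaps q hq)))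
      (h₁.differentiableAt (hΩ.mem_nhds hq)) (h₂.differentiableAt (hΩ.mem_nhds hq))

theorem second_partials_comp_pair {Ω Ω' : Set (ℂ × ℂ)} (hΩ : IsOpen Ω) (hΩ' : IsOpen Ω')
    (h₁ : DifferentiableOn ℂ w₁ Ω) (h₂ : DifferentiableOn ℂ w₂ Ω)
    (hmaps : ∀ q ∈ Ω, (w₁ q, w₂ q) ∈ Ω') (hf : DifferentiableOn ℂ f Ω') (hp : p ∈ Ω) :
    pdx (pdx fun q => f (w₁ q, w₂ q)) p =
      pdx (pdx f) (w₁ p, w₂ p) * pdx w₁ p ^ 2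
        + 2 * pdx (pdy f) (w₁ p, w₂ p) * pdx w₁ p * pdx w₂ p
        + pdy (pdy f) (w₁ p, w₂ p) * pdx w₂ p ^ 2
        + pdx f (w₁ p, w₂ p) * pdx (pdx w₁) p + pdy f (w₁ p, w₂ p) * pdx (pdx w₂) p ∧
    pdx (pdy fun q => f (w₁ q, w₂ q)) p =
      pdx (pdx f) (w₁ p, w₂ p) * pdx w₁ p * pdy w₁ p
        + pdx (pdy f) (w₁ p, w₂ p) * (pdx w₁ p * pdy w₂ p + pdx w₂ p * pdy w₁ p)
        + pdy (pdy f) (w₁ p, w₂ p) * pdx w₂ p * pdy w₂ p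
        + pdx f (w₁ p, w₂ p) * pdx (pdy w₁) p + pdy f (w₁ p, w₂ p) * pdx (pdy w₂) p ∧
    pdy (pdy fun q => f (w₁ q, w₂ q)) p =
      pdx (pdx f) (w₁ p, w₂ p) * pdy w₁ p ^ 2
        + 2 * pdx (pdy f) (w₁ p, w₂ p) * pdy w₁ p * pdy w₂ p
        + pdy (pdy f) (w₁ p, w₂ p) * pdy w₂ p ^ 2
        + pdx f (w₁ p, w₂ p) * pdy (pdy w₁) p + pdy f (w₁ p, w₂ p) * pdy (pdy w₂) p := by
  have hn := hΩ.mem_nhds hp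
  have hn' := hΩ'.mem_nhds (hmaps p hp)
  have d₁ := h₁.differentiableAt hn
  have d₂ := h₂.differentiableAt hn
  have dx₁ := (differentiableOn_pdx h₁ hΩ).differentiableAt hn
  have dx₂ := (differentiableOn_pdx h₂ hΩ).differentiableAt hn
  have dy₁ := (differentiableOn_pdy h₁ hΩ).differentiableAt hn
  have dy₂ := (differentiableOn_pdy h₂ hΩ).differentiableAt hn
  have dfx := (differentiableOn_pdx hf hΩ').differentiableAt hn'
  have dfy := (differentiableOn_pdy hf hΩ').differentiableAt hn'
  have dfx' : DifferentiableAt ℂ (fun q => pdx f (w₁ q, w₂ q)) p :=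
    dfx.comp p (f := fun q => (w₁ q, w₂ q)) (d₁.prodMk d₂)
  have dfy' : DifferentiableAt ℂ (fun q => pdy f (w₁ q, w₂ q)) p :=
    dfy.comp p (f := fun q => (w₁ q, w₂ q)) (d₁.prodMk d₂)
  have hsymm := pdy_pdx_eq_pdx_pdy hf hΩ' (hmaps p hp)
  refine ⟨?_, ?_, ?_⟩
  · rw [(pdx_comp_pair_eventuallyEq hΩ hΩ' h₁ h₂ hmaps hf hp).pdx_eq,
      pdx_mul_add_mul dfx' dx₁ dfy' dx₂, pdx_comp_pair dfx d₁ d₂, pdx_comp_pair dfy d₁ d₂, hsymm]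
    ring
  · rw [(pdy_comp_pair_eventuallyEq hΩ hΩ' h₁ h₂ hmaps hf hp).pdx_eq,
      pdx_mul_add_mul dfx' dy₁ dfy' dy₂, pdx_comp_pair dfx d₁ d₂, pdx_comp_pair dfy d₁ d₂, hsymm]
    ring
  · rw [(pdy_comp_pair_eventuallyEq hΩ hΩ' h₁ h₂ hmaps hf hp).pdy_eq,
      pdy_mul_add_mul dfx' dy₁ dfy' dy₂, pdy_comp_pair dfx d₁ d₂, pdy_comp_pair dfy d₁ d₂, hsymm]
    ring

end Chain

/-- The last column of `Umat` with the denominators cleared. -/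
theorem Umat_eq (c : ℂ) {w₁ w₂ : ℂ × ℂ → ℂ} {p : ℂ × ℂ} (hJ : Jac w₁ w₂ p ≠ 0) :
    Umat c w₁ w₂ p = Matrix.of fun i j : Fin 5 =>
      if hi : (i : ℕ) < 4 then
        if hj : (j : ℕ) < 4 then Mmat w₁ w₂ p ⟨i, hi⟩ ⟨j, hj⟩
        else c * ![pdx w₁ p * pdx (pdx w₂) p - pdx w₂ p * pdx (pdx w₁) p,
          -(pdy w₁ p * pdy (pdy w₂) p - pdy w₂ p * pdy (pdy w₁) p),
          (pdy w₁ p * pdx (pdx w₂) p - pdy w₂ p * pdx (pdx w₁) p)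
            + 2 * (pdx w₁ p * pdx (pdy w₂) p - pdx w₂ p * pdx (pdy w₁) p),
          -((pdx w₁ p * pdy (pdy w₂) p - pdx w₂ p * pdy (pdy w₁) p)
            + 2 * (pdy w₁ p * pdx (pdy w₂) p - pdy w₂ p * pdx (pdy w₁) p))] ⟨i, hi⟩
      else if (j : ℕ) < 4 then 0 else Jac w₁ w₂ p := by
  ext i j
  fin_cases i <;> fin_cases j <;>
    simp [Umat, Vvec, brX, brY, sqX, sqY, mul_assoc, mul_div_cancel₀, hJ]

/-- Cocycle property of the block matrices `U`:
`U_Φ(p) · U_Ψ(Φ(p)) = U_{Ψ∘Φ}(p)`. -/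
theorem statement7 (c : ℂ) (Ω Ω' Ω'' : Set (ℂ × ℂ))
    (hΩ : IsOpen Ω) (hΩ' : IsOpen Ω') (hΩ'' : IsOpen Ω'')
    (w₁ w₂ : ℂ × ℂ → ℂ)
    (hw₁ : DifferentiableOn ℂ w₁ Ω) (hw₂ : DifferentiableOn ℂ w₂ Ω)
    (hmaps : ∀ p ∈ Ω, (w₁ p, w₂ p) ∈ Ω')
    (hDw : ∀ p ∈ Ω, Jac w₁ w₂ p ≠ 0)
    (u₁ u₂ : ℂ × ℂ → ℂ)
    (hu₁ : DifferentiableOn ℂ u₁ Ω') (hu₂ : DifferentiableOn ℂ u₂ Ω')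
    (hmaps' : ∀ q ∈ Ω', (u₁ q, u₂ q) ∈ Ω'')
    (hDu : ∀ q ∈ Ω', Jac u₁ u₂ q ≠ 0)
    (hDcomp : ∀ p ∈ Ω,
      Jac (fun q => u₁ (w₁ q, w₂ q)) (fun q => u₂ (w₁ q, w₂ q)) p ≠ 0) :
    ∀ p ∈ Ω,
      Umat c w₁ w₂ p * Umat c u₁ u₂ (w₁ p, w₂ p) =
        Umat c (fun q => u₁ (w₁ q, w₂ q)) (fun q => u₂ (w₁ q, w₂ q)) p := by
  intro p hp
  have hn := hΩ.mem_nhds hp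
  have hn' := hΩ'.mem_nhds (hmaps p hp)
  have d₁ := hw₁.differentiableAt hn
  have d₂ := hw₂.differentiableAt hn
  have e₁ := hu₁.differentiableAt hn'
  have e₂ := hu₂.differentiableAt hn'
  obtain ⟨hxx₁, hxy₁, hyy₁⟩ := second_partials_comp_pair hΩ hΩ' hw₁ hw₂ hmaps hu₁ hp
  obtain ⟨hxx₂, hxy₂, hyy₂⟩ := second_partials_comp_pair hΩ hΩ' hw₁ hw₂ hmaps hu₂ hp
  rw [Umat_eq c (hDw p hp), Umat_eq c (hDu _ (hmaps p hp)), Umat_eq c (hDcomp p hp)]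
  simp only [Mmat, Jac, hxx₁, hxy₁, hyy₁, hxx₂, hxy₂, hyy₂, pdx_comp_pair e₁ d₁ d₂,
    pdx_comp_pair e₂ d₁ d₂, pdy_comp_pair e₁ d₁ d₂, pdy_comp_pair e₂ d₁ d₂]
  ext i j
  fin_cases i <;> fin_cases j <;> simp [Matrix.mul_apply, Fin.sum_univ_succ] <;> ring
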